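/- Let [a,b] ⊂ ℝ be compact, f₀ a probability density on [a,b] with f₀ > 0 and TV(log f₀) < ∞, and let F be the class of probability densities f on [a,b] with f > 0 and TV(log f) < ∞; set p_f = (1/2) log((f + f₀)/(2f₀)) and J(f) = 1 + TV(log f) + TV(log f₀), and for M ≥ 1 let P_M = {p_f : f ∈ F, J(f) ≤ M}. Then there is a constant A such that for every probability measure Q on [a,b], every M ≥ 1, and every δ > 0, there exist pairs of functions (l₁,u₁),...,(l_N,u_N) with N ≤ exp(A·M/δ) such that ‖uⱼ − lⱼ‖_{L²(Q)} ≤ δ for each j, and every p ∈ P_M satisfies lⱼ ≤ p ≤ uⱼ pointwise for some j. That is, the bracketing entropy of P_M at radius δ in L²(Q) is at most A·M/δ. -/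

import Mathlib

open MeasureTheory Set

/-- membership in the class `F` of probability densities on `[a,b]` that are
positive with log of bounded variation. -/
def InF (a b : ℝ) (f : ℝ → ℝ) : Prop :=
  (∀ t ∈ Set.Icc a b, 0 < f t) ∧
    MeasureTheory.IntegrableOn f (Set.Icc a b) ∧
    (∫ t in Set.Icc a b, f t) = 1 ∧
    eVariationOn (fun t => Real.log (f t)) (Set.Icc a b) ≠ ⊤

/-- `J(f) = 1 + TV(log f) + TV(log f₀)` on `[a,b]`. -/
noncomputable def Jfun (a b : ℝ) (f₀ f : ℝ → ℝ) : ℝ :=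
  1 + (eVariationOn (fun t => Real.log (f t)) (Set.Icc a b)).toReal
    + (eVariationOn (fun t => Real.log (f₀ t)) (Set.Icc a b)).toReal

/-- `p_f = (1/2) log((f + f₀)/(2 f₀))`. -/
noncomputable def pfun (f₀ f : ℝ → ℝ) : ℝ → ℝ :=
  fun t => (1 / 2) * Real.log ((f t + f₀ t) / (2 * f₀ t))

/-!
Functions of variation at most `K` bounded by `K` are described by binary words. With `η` about
`K / n`, the line is cut into `n` cells of mass `1 / n`, and inside a cell intervals are halved by
mass, the resolution growing from `η` by a factor `3 / 2` per halving, until the variation of the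
function on the interval drops below the current resolution. Recording the value at each cut point,
rounded to the current resolution, relative to the value recorded just before costs `O(n)` bits in
total and yields a bracket of squared width `O(η ^ 2)`. By the Kraft inequality there are at most
`2 ^ O(n)` such words, and `n` of order `K / δ` gives width `δ`.

This applies to `p_f`: since `u ↦ log (1 + exp u)` is `1`-Lipschitz, the variation of `p_f` is at
most that of `log f` plus that of `log f₀`, and as `f` and `f₀` have the same integral, `p_f` takes
values of both signs and is bounded by its variation.
-/

open scoped ENNReal

section Kraft

/-- The Kraft inequality: `w` can be realised as the lengths of the words of a binary prefix code.
It stands in for the code itself, since only the number of words of bounded length matters. -/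
def IsKraft {ι : Type*} (w : ι → ℕ) : Prop :=
  ∑' i, (2⁻¹ : ℝ≥0∞) ^ w i ≤ 1

variable {ι κ : Type*}

lemma isKraft_zero [Unique ι] : IsKraft fun _ : ι => 0 := by
  simp [IsKraft]

lemma isKraft_bool_one : IsKraft fun _ : Bool => 1 := by
  simp [IsKraft]

lemma isKraft_int_natAbs_add_two : IsKraft fun d : ℤ => d.natAbs + 2 := by
  have hgeom : ∑' n : ℕ, (2⁻¹ : ℝ≥0∞) ^ (n + 1) = 1 := by
    rw [ENNReal.tsum_geometric_add_one, ENNReal.one_sub_inv_two, inv_inv,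
      ENNReal.inv_mul_cancel two_ne_zero ENNReal.ofNat_ne_top]
  have hnonneg : ∑' n : ℕ, (2⁻¹ : ℝ≥0∞) ^ ((n : ℤ).natAbs + 2) = 2⁻¹ := by
    simp_rw [Int.natAbs_natCast, pow_succ _ (_ + 1), ENNReal.tsum_mul_right, hgeom, one_mul]
  have hneg : ∑' n : ℕ, (2⁻¹ : ℝ≥0∞) ^ ((-((n : ℤ) + 1)).natAbs + 2) ≤ 2⁻¹ := by
    refine (ENNReal.tsum_le_tsum fun n => ?_).trans_eq hnonneg
    have hlen : (n : ℤ).natAbs + 2 ≤ (-((n : ℤ) + 1)).natAbs + 2 := by lia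
    exact pow_le_pow_right_of_le_one' (ENNReal.inv_le_one.2 one_le_two) hlen
  rw [IsKraft, tsum_of_nat_of_neg_add_one ENNReal.summable ENNReal.summable, hnonneg]
  exact (add_le_add_right hneg _).trans_eq ENNReal.inv_two_add_inv_two

lemma IsKraft.prod {w : ι → ℕ} {w' : κ → ℕ} (hw : IsKraft w) (hw' : IsKraft w') :
    IsKraft fun i : ι × κ => w i.1 + w' i.2 := by
  rw [IsKraft, ENNReal.tsum_prod']
  simp_rw [pow_add, ENNReal.tsum_mul_left, ENNReal.tsum_mul_right]
  exact mul_le_one' hw hw'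

lemma IsKraft.sigma {κ : ι → Type*} {w : ι → ℕ} {w' : ∀ i, κ i → ℕ} (hw : IsKraft w)
    (hw' : ∀ i, IsKraft (w' i)) : IsKraft fun i : Σ i, κ i => w i.1 + w' i.1 i.2 := by
  rw [IsKraft, ENNReal.tsum_sigma']
  simp_rw [pow_add, ENNReal.tsum_mul_left]
  exact (ENNReal.tsum_le_tsum fun i => mul_le_of_le_one_right' (hw' i)).trans hw

lemma IsKraft.finite_and_ncard_le {w : ι → ℕ} (hw : IsKraft w) {n : ℕ} {s : Set ι}
    (hs : ∀ i ∈ s, w i ≤ n) : s.Finite ∧ s.ncard ≤ 2 ^ n := by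
  obtain ⟨hfin, hcard⟩ := ENNReal.finset_card_const_le_le_of_tsum_le ENNReal.one_ne_top hw
    (ε := 2⁻¹ ^ n) (by simp)
  have hsub : s ⊆ {i | (2⁻¹ : ℝ≥0∞) ^ n ≤ 2⁻¹ ^ w i} := fun i hi =>
    pow_le_pow_right_of_le_one' (ENNReal.inv_le_one.2 one_le_two) (hs i hi)
  refine ⟨hfin.subset hsub, (ncard_le_ncard hsub hfin).trans ?_⟩
  have hpow : (1 : ℝ≥0∞) / 2⁻¹ ^ n = (2 ^ n : ℕ) := by
    rw [one_div, ← ENNReal.inv_pow, inv_inv, Nat.cast_pow, Nat.cast_ofNat]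
  rw [hpow] at hcard
  rw [ncard_eq_toFinset_card _ hfin]
  exact_mod_cast hcard

end Kraft

section OpenIntervals

variable {α : Type*} [MeasurableSpace α]

lemma measure_Ioo_le_of_forall_Icc [LinearOrder α] [TopologicalSpace α] [OrderTopology α]
    [DenselyOrdered α] [FirstCountableTopology α] {μ : Measure α} {x y : α} {c : ℝ≥0∞}
    (h : ∀ s t, x < s → t < y → μ (Icc s t) ≤ c) : μ (Ioo x y) ≤ c := by
  rcases le_or_gt y x with hyx | hxy
  · simp [Ioo_eq_empty_of_le hyx]
  obtain ⟨s, t, hs, ht, hxs, hty, -, hsx, hty'⟩ := exists_seq_strictAnti_strictMono_tendsto hxy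
  have hsub : Ioo x y ⊆ ⋃ n, Icc (s n) (t n) := fun z hz => by
    obtain ⟨n, hsn, htn⟩ := ((hsx.eventually (gt_mem_nhds hz.1)).and
      (hty'.eventually (lt_mem_nhds hz.2))).exists
    exact mem_iUnion.2 ⟨n, hsn.le, htn.le⟩
  have hmono : Monotone fun n => Icc (s n) (t n) := fun i j hij =>
    Icc_subset_Icc (hs.antitone hij) (ht.monotone hij)
  calc μ (Ioo x y) ≤ μ (⋃ n, Icc (s n) (t n)) := measure_mono hsub
    _ = ⨆ n, μ (Icc (s n) (t n)) := hmono.measure_iUnion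
    _ ≤ c := iSup_le fun n => h _ _ (hxs n).1 (hty n).2

lemma exists_measure_Ioo_le_and_measure_Ioo_le [ConditionallyCompleteLinearOrder α]
    [TopologicalSpace α] [OrderTopology α] [DenselyOrdered α] [FirstCountableTopology α]
    [BorelSpace α] {μ : Measure α} {x y : α} (hxy : x ≤ y) {c₁ c₂ : ℝ≥0∞}
    (hμ : μ (Ioo x y) ≤ c₁ + c₂) :
    ∃ p ∈ Icc x y, μ (Ioo x p) ≤ c₁ ∧ μ (Ioo p y) ≤ c₂ := by
  set S : Set α := {t ∈ Icc x y | μ (Ioo x t) ≤ c₁}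
  have hxS : x ∈ S := ⟨left_mem_Icc.2 hxy, by simp⟩
  have hbdd : BddAbove S := ⟨y, fun t ht => ht.1.2⟩
  have hxp : x ≤ sSup S := le_csSup hbdd hxS
  refine ⟨sSup S, ⟨hxp, csSup_le ⟨x, hxS⟩ fun t ht => ht.1.2⟩,
    measure_Ioo_le_of_forall_Icc fun s t hs ht => ?_,
    measure_Ioo_le_of_forall_Icc fun s t hs ht => ?_⟩
  · obtain ⟨t', ht'S, htt'⟩ := exists_lt_of_lt_csSup ⟨x, hxS⟩ ht
    exact (measure_mono (Icc_subset_Ioo hs htt')).trans ht'S.2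
  · rcases lt_or_ge t s with hts | hst
    · simp [Icc_eq_empty_of_lt hts]
    have hlt : c₁ < μ (Ioo x s) := by
      by_contra! hle
      exact hs.not_ge (le_csSup hbdd ⟨⟨hxp.trans hs.le, hst.trans ht.le⟩, hle⟩)
    have hdisj : Disjoint (Ioo x s) (Icc s t) :=
      disjoint_left.2 fun z hz hz' => hz.2.not_ge hz'.1
    have hsub : Ioo x s ∪ Icc s t ⊆ Ioo x y := union_subset
      (Ioo_subset_Ioo_right (hst.trans ht.le)) (Icc_subset_Ioo (hxp.trans_lt hs) ht)
    refine (ENNReal.add_le_add_iff_left hlt.ne_top).1 ?_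
    calc c₁ + μ (Icc s t) ≤ μ (Ioo x s) + μ (Icc s t) := by gcongr
      _ = μ (Ioo x s ∪ Icc s t) := (measure_union hdisj measurableSet_Icc).symm
      _ ≤ c₁ + c₂ := (measure_mono hsub).trans hμ

lemma measure_singleton_inter_Ioo_add_measure_Ioo_le [LinearOrder α] [TopologicalSpace α]
    [OrderClosedTopology α] [OpensMeasurableSpace α] (μ : Measure α) {x p : α} (y : α)
    (hxp : x ≤ p) : μ ({p} ∩ Ioo x y) + μ (Ioo p y) ≤ μ (Ioo x y) := by
  have hdisj : Disjoint ({p} ∩ Ioo x y) (Ioo p y) :=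
    disjoint_left.2 fun _ hz hz' => hz'.1.ne' hz.1
  rw [← measure_union hdisj measurableSet_Ioo]
  exact measure_mono (union_subset inter_subset_right (Ioo_subset_Ioo_left hxp))

lemma setLIntegral_Ioo_le_split [LinearOrder α] [MeasurableSingletonClass α] (μ : Measure α)
    (x p y : α) (F : α → ℝ≥0∞) :
    ∫⁻ t in Ioo x y, F t ∂μ ≤ ∫⁻ t in Ioo x p, F t ∂μ +
      (F p * μ ({p} ∩ Ioo x y) + ∫⁻ t in Ioo p y, F t ∂μ) := by
  have hcover : Ioo x y ⊆ Ioo x p ∪ ({p} ∩ Ioo x y ∪ Ioo p y) := fun t ht => by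
    rcases lt_trichotomy t p with htp | htp | htp
    · exact Or.inl ⟨ht.1, htp⟩
    · exact Or.inr (Or.inl ⟨htp, ht⟩)
    · exact Or.inr (Or.inr ⟨htp, ht.2⟩)
  have hpoint : ∫⁻ t in {p} ∩ Ioo x y, F t ∂μ = F p * μ ({p} ∩ Ioo x y) := by
    rw [← Measure.restrict_restrict (measurableSet_singleton p), lintegral_singleton,
      Measure.restrict_apply (measurableSet_singleton p)]
  calc ∫⁻ t in Ioo x y, F t ∂μ
      ≤ ∫⁻ t in Ioo x p ∪ ({p} ∩ Ioo x y ∪ Ioo p y), F t ∂μ := lintegral_mono_set hcover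
    _ ≤ ∫⁻ t in Ioo x p, F t ∂μ + ∫⁻ t in {p} ∩ Ioo x y ∪ Ioo p y, F t ∂μ :=
      lintegral_union_le _ _ _
    _ ≤ _ := by
      rw [← hpoint]
      gcongr
      exact lintegral_union_le _ _ _

end OpenIntervals

section BracketCode

/-- A family of brackets `[lower i, upper i]` whose labels `i` carry code lengths satisfying the
Kraft inequality, so that at most `2 ^ n` of the brackets have length at most `n`. -/
structure BracketCode (α : Type*) where
  ι : Type
  lower : ι → α → ℝ
  upper : ι → α → ℝ
  length : ι → ℕ
  kraft : IsKraft length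

namespace BracketCode

variable {α : Type*}

lemma exists_fin_enumeration (C : BracketCode α) (n : ℕ) (P : C.ι → Prop) :
    ∃ N ≤ 2 ^ n, ∃ e : Fin N → C.ι, (∀ j, P (e j)) ∧
      ∀ i, C.length i ≤ n → P i → i ∈ range e := by
  set T : Set C.ι := {i | C.length i ≤ n ∧ P i}
  obtain ⟨hfin, hcard⟩ := C.kraft.finite_and_ncard_le (s := T) fun i hi => hi.1
  have : Finite T := hfin
  refine ⟨T.ncard, hcard, fun j => ((Finite.equivFin T).symm j).1,
    fun j => ((Finite.equivFin T).symm j).2.2, fun i hi hP => ?_⟩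
  exact ⟨Finite.equivFin T ⟨i, hi, hP⟩, congrArg Subtype.val (Equiv.symm_apply_apply _ _)⟩

/-- The single bracket of constant functions `[c - ε, c + ε]`. -/
def const (α : Type*) (c ε : ℝ) : BracketCode α where
  ι := Unit
  lower _ _ := c - ε
  upper _ _ := c + ε
  length _ := 0
  kraft := isKraft_zero

/-- The union of the codes `C k`, the choice of `k` costing an additional length `w k`. -/
def tag {κ : Type} (w : κ → ℕ) (hw : IsKraft w) (C : κ → BracketCode α) : BracketCode α where
  ι := Σ k, (C k).ι
  lower i := (C i.1).lower i.2
  upper i := (C i.1).upper i.2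
  length i := w i.1 + (C i.1).length i.2
  kraft := hw.sigma fun k => (C k).kraft

/-- The union of two codes, distinguished by one additional bit. -/
def union (C₁ C₂ : BracketCode α) : BracketCode α :=
  tag (fun _ : Bool => 1) isKraft_bool_one fun b => bif b then C₂ else C₁

/-- The union of a sequence of codes indexed by `ℤ`; choosing the index `d` costs `|d| + 2`. -/
def iUnionInt (C : ℤ → BracketCode α) : BracketCode α :=
  tag (fun d => d.natAbs + 2) isKraft_int_natAbs_add_two C

/-- The function equal to `f₁` to the left of `p`, to `c` at `p` and to `f₂` to the right of `p`. -/
def glueFun [LinearOrder α] (p : α) (c : ℝ) (f₁ f₂ : α → ℝ) (t : α) : ℝ :=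
  if t < p then f₁ t else if p < t then f₂ t else c

section glueFun

variable [LinearOrder α] {p t : α} (c : ℝ) (f₁ f₂ : α → ℝ)

lemma glueFun_of_lt (h : t < p) : glueFun p c f₁ f₂ t = f₁ t := if_pos h

lemma glueFun_of_gt (h : p < t) : glueFun p c f₁ f₂ t = f₂ t := by
  rw [glueFun, if_neg h.not_gt, if_pos h]

lemma glueFun_self : glueFun p c f₁ f₂ p = c := by
  simp [glueFun]

end glueFun

/-- Brackets of `C₁` to the left of `p`, brackets of `C₂` to the right of `p`, and
`[c - ε, c + ε]` at `p`. -/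
def glue [LinearOrder α] (p : α) (c ε : ℝ) (C₁ C₂ : BracketCode α) : BracketCode α where
  ι := C₁.ι × C₂.ι
  lower i := glueFun p (c - ε) (C₁.lower i.1) (C₂.lower i.2)
  upper i := glueFun p (c + ε) (C₁.upper i.1) (C₂.upper i.2)
  length i := C₁.length i.1 + C₂.length i.2
  kraft := C₁.kraft.prod C₂.kraft

/-- The code that describes a function by its value at `p`, as a multiple of `η` relative to the
reference value `r`, by a word of `C₁` to the left of `p`, and by a word of `C₂ d` to the right of
`p`, where `r + η * d` is the rounded value at `p`. -/
def branch [LinearOrder α] (p : α) (r η : ℝ) (C₁ : BracketCode α) (C₂ : ℤ → BracketCode α) :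
    BracketCode α :=
  iUnionInt fun d => glue p (r + η * d) η C₁ (C₂ d)

variable [LinearOrder α] [MeasurableSpace α]

/-- Some bracket of `C` of code length at most `n` contains `g` on the open interval `(x, y)` and
has squared `L²(μ)`-width at most `v` there. -/
def Encodes (C : BracketCode α) (μ : Measure α) (x y : α) (g : α → ℝ) (n : ℝ) (v : ℝ≥0∞) : Prop :=
  ∃ i, (C.length i : ℝ) ≤ n ∧ (∀ t ∈ Ioo x y, g t ∈ Icc (C.lower i t) (C.upper i t)) ∧
    ∫⁻ t in Ioo x y, ENNReal.ofReal ((C.upper i t - C.lower i t) ^ 2) ∂μ ≤ v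

variable {μ : Measure α} {x y p : α} {g : α → ℝ} {c r ε η n n' n₁ n₂ : ℝ} {v v' v₁ v₂ : ℝ≥0∞}
  {C C₁ C₂ : BracketCode α}

lemma Encodes.mono (h : C.Encodes μ x y g n v) (hn : n ≤ n') (hv : v ≤ v') :
    C.Encodes μ x y g n' v' := by
  obtain ⟨i, hlen, hmem, hint⟩ := h
  exact ⟨i, hlen.trans hn, hmem, hint.trans hv⟩

lemma encodes_const (hg : ∀ t ∈ Ioo x y, |g t - c| ≤ ε) :
    (const α c ε).Encodes μ x y g 0 (ENNReal.ofReal ((2 * ε) ^ 2) * μ (Ioo x y)) := by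
  refine ⟨(), by simp [const], fun t ht => ?_, ?_⟩
  · have h := abs_le.1 (hg t ht)
    exact ⟨by simp only [const]; linarith, by simp only [const]; linarith⟩
  · have hwidth : c + ε - (c - ε) = 2 * ε := by ring
    simp only [const, hwidth, setLIntegral_const, le_refl]

lemma Encodes.tag {κ : Type} {w : κ → ℕ} (hw : IsKraft w) {C : κ → BracketCode α} {k : κ}
    (h : (C k).Encodes μ x y g n v) : (tag w hw C).Encodes μ x y g (w k + n) v := by
  obtain ⟨i, hlen, hmem, hint⟩ := h
  exact ⟨⟨k, i⟩, by simpa [BracketCode.tag] using hlen, hmem, hint⟩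

lemma Encodes.union_left (h : C₁.Encodes μ x y g n v) (C₂ : BracketCode α) :
    (C₁.union C₂).Encodes μ x y g (1 + n) v := by
  simpa only [Nat.cast_one] using! Encodes.tag isKraft_bool_one
    (C := fun b => bif b then C₂ else C₁) (k := false) h

lemma Encodes.union_right (h : C₂.Encodes μ x y g n v) (C₁ : BracketCode α) :
    (C₁.union C₂).Encodes μ x y g (1 + n) v := by
  simpa only [Nat.cast_one] using! Encodes.tag isKraft_bool_one
    (C := fun b => bif b then C₂ else C₁) (k := true) h

lemma exists_int_abs_sub_le_and_natAbs_le (hη : 0 < η) (z r : ℝ) :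
    ∃ d : ℤ, |z - (r + η * d)| ≤ η ∧ (d.natAbs : ℝ) ≤ |z - r| / η + 1 := by
  have hround := abs_sub_round ((z - r) / η)
  refine ⟨round ((z - r) / η), ?_, ?_⟩
  · calc |z - (r + η * round ((z - r) / η))|
        = |η * ((z - r) / η - round ((z - r) / η))| := by congr 1; field_simp; ring
      _ = η * |(z - r) / η - round ((z - r) / η)| := by rw [abs_mul, abs_of_pos hη]
      _ ≤ η * 1 := by gcongr; linarith
      _ = η := mul_one η
  · have htri := abs_sub_abs_le_abs_sub (round ((z - r) / η) : ℝ) ((z - r) / η)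
    rw [abs_sub_comm, abs_div, abs_of_pos hη] at htri
    rw [Nat.cast_natAbs, Int.cast_abs]
    linarith

lemma encodes_iUnionInt {C : ℤ → BracketCode α} {z : ℝ} (hη : 0 < η) (r : ℝ)
    (h : ∀ d : ℤ, |z - (r + η * d)| ≤ η → (C d).Encodes μ x y g n v) :
    (iUnionInt C).Encodes μ x y g (|z - r| / η + 3 + n) v := by
  obtain ⟨d, hd, hdlen⟩ := exists_int_abs_sub_le_and_natAbs_le hη z r
  refine ((h d hd).tag isKraft_int_natAbs_add_two).mono ?_ le_rfl
  push_cast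
  linarith

lemma Encodes.glue [TopologicalSpace α] [OrderClosedTopology α]
    [OpensMeasurableSpace α] (h₁ : C₁.Encodes μ x p g n₁ v₁) (h₂ : C₂.Encodes μ p y g n₂ v₂)
    (hp : |g p - c| ≤ ε) :
    (glue p c ε C₁ C₂).Encodes μ x y g (n₁ + n₂)
      (v₁ + (ENNReal.ofReal ((2 * ε) ^ 2) * μ ({p} ∩ Ioo x y) + v₂)) := by
  obtain ⟨i, hlen₁, hmem₁, hint₁⟩ := h₁
  obtain ⟨j, hlen₂, hmem₂, hint₂⟩ := h₂
  refine ⟨(i, j), ?_, fun t ht => ?_, ?_⟩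
  · simpa [BracketCode.glue] using add_le_add hlen₁ hlen₂
  · simp only [BracketCode.glue]
    rcases lt_trichotomy t p with htp | rfl | htp
    · simpa only [glueFun_of_lt _ _ _ htp] using hmem₁ t ⟨ht.1, htp⟩
    · have := abs_le.1 hp
      simp only [glueFun_self]
      exact ⟨by linarith, by linarith⟩
    · simpa only [glueFun_of_gt _ _ _ htp] using hmem₂ t ⟨htp, ht.2⟩
  · refine (setLIntegral_Ioo_le_split μ x p y _).trans ?_
    refine add_le_add (le_of_eq_of_le ?_ hint₁) (add_le_add (le_of_eq ?_) (le_of_eq_of_le ?_ hint₂))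
    · exact setLIntegral_congr_fun measurableSet_Ioo fun t ht => by
        simp only [BracketCode.glue, glueFun_of_lt _ _ _ ht.2]
    · simp only [BracketCode.glue, glueFun_self]
      ring_nf
    · exact setLIntegral_congr_fun measurableSet_Ioo fun t ht => by
        simp only [BracketCode.glue, glueFun_of_gt _ _ _ ht.1]

end BracketCode

end BracketCode

section BoundedVariation

lemma abs_sub_le_variationOnFromTo {α : Type*} [LinearOrder α] {g : α → ℝ} {s : Set α}
    (hg : LocallyBoundedVariationOn g s) {x y : α} (hx : x ∈ s) (hy : y ∈ s) (hxy : x ≤ y) :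
    |g y - g x| ≤ variationOnFromTo g s x y := by
  rw [variationOnFromTo.eq_of_le g s hxy, ← Real.dist_eq]
  exact BoundedVariationOn.dist_le (hg x y hx hy) ⟨hy, hxy, le_rfl⟩ ⟨hx, le_rfl, hxy⟩

namespace BracketCode

variable {α : Type*} [MeasurableSpace α] {μ : Measure α} {x y p : α} {g : α → ℝ} {r η : ℝ}

section Encodes

variable [LinearOrder α]

lemma encodes_const_of_variation_le (hg : LocallyBoundedVariationOn g univ)
    (hr : |g x - r| ≤ η) (hV : variationOnFromTo g univ x y ≤ η) :
    (const α r (2 * η)).Encodes μ x y g 0 (ENNReal.ofReal (16 * η ^ 2) * μ (Ioo x y)) := by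
  have hclose : ∀ t ∈ Ioo x y, |g t - r| ≤ 2 * η := fun t ht => by
    have hxt := abs_sub_le_variationOnFromTo hg (mem_univ x) (mem_univ t) ht.1.le
    have hty := variationOnFromTo.nonneg_of_le g univ ht.2.le
    have hadd := variationOnFromTo.add hg (mem_univ x) (mem_univ t) (mem_univ y)
    linarith [abs_sub_le (g t) (g x) r]
  convert encodes_const (μ := μ) hclose using 3
  ring

lemma encodes_branch [TopologicalSpace α] [OrderClosedTopology α] [OpensMeasurableSpace α]
    {C₁ : BracketCode α} {C₂ : ℤ → BracketCode α} {n₁ n₂ : ℝ} {v₁ v₂ : ℝ≥0∞}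
    (hg : LocallyBoundedVariationOn g univ) (hη : 0 < η) (hxp : x ≤ p) (hr : |g x - r| ≤ η)
    (h₁ : C₁.Encodes μ x p g n₁ v₁)
    (h₂ : ∀ d : ℤ, |g p - (r + η * d)| ≤ η → (C₂ d).Encodes μ p y g n₂ v₂) :
    (branch p r η C₁ C₂).Encodes μ x y g (variationOnFromTo g univ x p / η + 4 + (n₁ + n₂))
      (v₁ + (ENNReal.ofReal ((2 * η) ^ 2) * μ ({p} ∩ Ioo x y) + v₂)) := by
  have hdist : |g p - r| / η ≤ variationOnFromTo g univ x p / η + 1 := by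
    rw [div_add_one hη.ne']
    gcongr
    exact (abs_sub_le _ (g x) _).trans
      (add_le_add (abs_sub_le_variationOnFromTo hg (mem_univ x) (mem_univ p) hxp) hr)
  exact (encodes_iUnionInt hη r fun d hd => h₁.glue (h₂ d hd) hd).mono (by linarith) le_rfl

lemma encodes_branch_add [TopologicalSpace α] [OrderClosedTopology α] [OpensMeasurableSpace α]
    {C₁ : BracketCode α} {C₂ : ℤ → BracketCode α} {n₁ n₂ : ℝ} {v₁ v₂ : ℝ≥0∞}
    (hg : LocallyBoundedVariationOn g univ) (hη : 0 < η) (hxp : x ≤ p) (hr : |g x - r| ≤ η)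
    (h₁ : C₁.Encodes μ x p g n₁ v₁)
    (h₂ : ∀ d : ℤ, |g p - (r + η * d)| ≤ η →
      (C₂ d).Encodes μ p y g n₂ (ENNReal.ofReal ((2 * η) ^ 2) * μ (Ioo p y) + v₂)) :
    (branch p r η C₁ C₂).Encodes μ x y g (variationOnFromTo g univ x p / η + 4 + (n₁ + n₂))
      (ENNReal.ofReal ((2 * η) ^ 2) * μ (Ioo x y) + (v₁ + v₂)) := by
  refine (encodes_branch hg hη hxp hr h₁ h₂).mono le_rfl ?_
  calc _ = ENNReal.ofReal ((2 * η) ^ 2) * (μ ({p} ∩ Ioo x y) + μ (Ioo p y)) + (v₁ + v₂) := by ring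
    _ ≤ _ := by
      gcongr
      exact measure_singleton_inter_Ioo_add_measure_Ioo_le μ y hxp

lemma encodes_const_of_measure_le {q : ℝ} (hg : LocallyBoundedVariationOn g univ) (hq : 0 ≤ q)
    (hη : 0 < η) (hxy : x ≤ y) (hμ : μ (Ioo x y) ≤ ENNReal.ofReal q) (hr : |g x - r| ≤ η)
    (hV : variationOnFromTo g univ x y ≤ η) :
    (const α r (2 * η)).Encodes μ x y g 0
      (ENNReal.ofReal (q * η ^ 2 * (16 + 96 * (variationOnFromTo g univ x y / η)))) := by
  refine (encodes_const_of_variation_le hg hr hV).mono le_rfl ?_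
  have hX : 0 ≤ variationOnFromTo g univ x y / η :=
    div_nonneg (variationOnFromTo.nonneg_of_le g univ hxy) hη.le
  calc ENNReal.ofReal (16 * η ^ 2) * μ (Ioo x y)
      ≤ ENNReal.ofReal (16 * η ^ 2) * ENNReal.ofReal q := by gcongr
    _ = ENNReal.ofReal (q * η ^ 2 * 16) := by
      rw [← ENNReal.ofReal_mul (by positivity)]
      ring_nf
    _ ≤ _ := by
      gcongr
      linarith

lemma encodes_branch_of_lt_variation [TopologicalSpace α] [OrderClosedTopology α]
    [OpensMeasurableSpace α] {q : ℝ} {C₁ : BracketCode α} {C₂ : ℤ → BracketCode α}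
    (hg : LocallyBoundedVariationOn g univ) (hq : 0 ≤ q) (hη : 0 < η) (hxp : x ≤ p) (hpy : p ≤ y)
    (hμ : μ (Ioo x y) ≤ ENNReal.ofReal q) (hr : |g x - r| ≤ η)
    (hV : η < variationOnFromTo g univ x y)
    (h₁ : C₁.Encodes μ x p g (1 + 14 * (variationOnFromTo g univ x p / η))
      (ENNReal.ofReal (q * η ^ 2 * (18 + 72 * (variationOnFromTo g univ x p / η)))))
    (h₂ : ∀ d : ℤ, |g p - (r + η * d)| ≤ η →
      (C₂ d).Encodes μ p y g (1 + 14 * (variationOnFromTo g univ p y / η))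
        (ENNReal.ofReal (q * η ^ 2 * (18 + 72 * (variationOnFromTo g univ p y / η))))) :
    (branch p r η C₁ C₂).Encodes μ x y g (21 * (variationOnFromTo g univ x y / η))
      (ENNReal.ofReal (q * η ^ 2 * (16 + 96 * (variationOnFromTo g univ x y / η)))) := by
  have hsplit := variationOnFromTo.add hg (mem_univ x) (mem_univ p) (mem_univ y)
  rw [← hsplit, ← one_lt_div₀ hη, add_div] at hV
  have hX := div_nonneg (variationOnFromTo.nonneg_of_le g univ hxp) hη.le
  have hY := div_nonneg (variationOnFromTo.nonneg_of_le g univ hpy) hη.le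
  rw [← hsplit, add_div]
  set X := variationOnFromTo g univ x p / η
  set Y := variationOnFromTo g univ p y / η
  refine (encodes_branch hg hη hxp hr h₁ h₂).mono (by linarith) ?_
  have hpoint : ENNReal.ofReal ((2 * η) ^ 2) * μ ({p} ∩ Ioo x y) ≤
      ENNReal.ofReal (q * η ^ 2 * 4) :=
    calc _ ≤ ENNReal.ofReal ((2 * η) ^ 2) * ENNReal.ofReal q := by
          gcongr
          exact (measure_mono inter_subset_right).trans hμ
      _ = _ := by
        rw [← ENNReal.ofReal_mul (by positivity)]
        ring_nf
  calc _ ≤ ENNReal.ofReal (q * η ^ 2 * (18 + 72 * X)) +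
        (ENNReal.ofReal (q * η ^ 2 * 4) + ENNReal.ofReal (q * η ^ 2 * (18 + 72 * Y))) := by gcongr
    _ = ENNReal.ofReal (q * η ^ 2 * (40 + 72 * (X + Y))) := by
      rw [← ENNReal.ofReal_add (by positivity) (by positivity),
        ← ENNReal.ofReal_add (by positivity) (by positivity)]
      ring_nf
    _ ≤ _ := by
      gcongr ENNReal.ofReal (_ * ?_)
      linarith

end Encodes

variable [ConditionallyCompleteLinearOrder α] [TopologicalSpace α] [OrderTopology α]
  [DenselyOrdered α] [FirstCountableTopology α] [BorelSpace α]

/- Halving the mass while coarsening the resolution by `3 / 2` makes both costs summable over the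
levels: a level contributes at most `V / η` intervals, and `(3 / 2)⁻¹ < 1` controls the code
length, while `(3 / 2)² / 2 * (3 / 2)⁻¹ = 3 / 4 < 1` controls the squared width. -/
theorem exists_encodes_of_measure_le (m : ℕ) : ∀ {x y : α} {q η : ℝ} (r : ℝ), x ≤ y → 0 ≤ q →
    0 < η → μ (Ioo x y) ≤ ENNReal.ofReal q →
    ∃ C : BracketCode α, ∀ g, LocallyBoundedVariationOn g univ → |g x - r| ≤ η →
      variationOnFromTo g univ x y ≤ η * (3 / 2) ^ m →
      C.Encodes μ x y g (1 + 21 * (variationOnFromTo g univ x y / η))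
        (ENNReal.ofReal (q * η ^ 2 * (16 + 96 * (variationOnFromTo g univ x y / η)))) := by
  induction m with
  | zero =>
    intro x y q η r hxy hq hη hμ
    refine ⟨const α r (2 * η), fun g hg hr hV => ?_⟩
    have hX := div_nonneg (variationOnFromTo.nonneg_of_le g univ hxy) hη.le
    rw [pow_zero, mul_one] at hV
    exact (encodes_const_of_measure_le hg hq hη hxy hμ hr hV).mono (by linarith) le_rfl
  | succ m ih =>
    intro x y q η r hxy hq hη hμ
    have hhalf : μ (Ioo x y) ≤ ENNReal.ofReal (q / 2) + ENNReal.ofReal (q / 2) := by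
      rwa [← ENNReal.ofReal_add (by positivity) (by positivity), add_halves]
    obtain ⟨p, ⟨hxp, hpy⟩, hμ₁, hμ₂⟩ := exists_measure_Ioo_le_and_measure_Ioo_le hxy hhalf
    have hη' : 0 < 3 / 2 * η := by positivity
    obtain ⟨C₁, hC₁⟩ := ih r hxp (by positivity) hη' hμ₁
    choose C₂ hC₂ using fun d : ℤ => ih (r + η * d) hpy (by positivity) hη' hμ₂
    have hlength : ∀ V, 1 + 21 * (V / (3 / 2 * η)) = 1 + 14 * (V / η) := fun V => by
      field_simp
      ring
    have hwidth : ∀ V, q / 2 * (3 / 2 * η) ^ 2 * (16 + 96 * (V / (3 / 2 * η))) =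
        q * η ^ 2 * (18 + 72 * (V / η)) := fun V => by
      field_simp
      ring
    simp only [hlength, hwidth] at hC₁ hC₂
    refine ⟨(const α r (2 * η)).union (branch p r η C₁ C₂), fun g hg hr hV => ?_⟩
    have hsplit := variationOnFromTo.add hg (mem_univ x) (mem_univ p) (mem_univ y)
    have hV₁ := variationOnFromTo.nonneg_of_le g univ hxp
    have hV₂ := variationOnFromTo.nonneg_of_le g univ hpy
    rcases le_or_gt (variationOnFromTo g univ x y) η with hle | hlt
    · have hX := div_nonneg (variationOnFromTo.nonneg_of_le g univ hxy) hη.le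
      exact ((encodes_const_of_measure_le hg hq hη hxy hμ hr hle).union_left _).mono
        (by linarith) le_rfl
    · rw [pow_succ', ← mul_assoc, mul_comm η] at hV
      exact (encodes_branch_of_lt_variation hg hq hη hxp hpy hμ hr hlt
        (hC₁ g hg (by linarith) (by linarith))
        fun d hd => hC₂ d g hg (by linarith) (by linarith)).union_right _

theorem exists_encodes_of_measure_le_mul (n m : ℕ) {q η : ℝ} (hq : 0 ≤ q) (hη : 0 < η) :
    ∀ {x y : α} (r : ℝ), x ≤ y → μ (Ioo x y) ≤ ENNReal.ofReal ((n + 1) * q) →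
    ∃ C : BracketCode α, ∀ g, LocallyBoundedVariationOn g univ → |g x - r| ≤ η →
      variationOnFromTo g univ x y ≤ η * (3 / 2) ^ m →
      C.Encodes μ x y g (1 + 5 * n + 22 * (variationOnFromTo g univ x y / η))
        (ENNReal.ofReal ((2 * η) ^ 2) * μ (Ioo x y) + ENNReal.ofReal
          (q * η ^ 2 * (16 * (n + 1) + 96 * (variationOnFromTo g univ x y / η)))) := by
  induction n with
  | zero =>
    intro x y r hxy hμ
    rw [Nat.cast_zero, zero_add, one_mul] at hμ
    obtain ⟨C, hC⟩ := exists_encodes_of_measure_le m r hxy hq hη hμ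
    refine ⟨C, fun g hg hr hV => (hC g hg hr hV).mono ?_ ?_⟩
    · have hX := div_nonneg (variationOnFromTo.nonneg_of_le g univ hxy) hη.le
      simp only [Nat.cast_zero]
      linarith
    · simp only [Nat.cast_zero, zero_add, mul_one, le_add_self]
  | succ n ih =>
    intro x y r hxy hμ
    have hsum : μ (Ioo x y) ≤ ENNReal.ofReal q + ENNReal.ofReal ((n + 1) * q) := by
      rw [← ENNReal.ofReal_add hq (by positivity)]
      convert hμ using 2
      push_cast
      ring
    obtain ⟨p, ⟨hxp, hpy⟩, hμ₁, hμ₂⟩ := exists_measure_Ioo_le_and_measure_Ioo_le hxy hsum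
    obtain ⟨C₁, hC₁⟩ := exists_encodes_of_measure_le m r hxp hq hη hμ₁
    choose C₂ hC₂ using fun d : ℤ => ih (r + η * d) hpy hμ₂
    refine ⟨branch p r η C₁ C₂, fun g hg hr hV => ?_⟩
    have hsplit := variationOnFromTo.add hg (mem_univ x) (mem_univ p) (mem_univ y)
    have hV₁ := variationOnFromTo.nonneg_of_le g univ hxp
    have hV₂ := variationOnFromTo.nonneg_of_le g univ hpy
    refine (encodes_branch_add hg hη hxp hr (hC₁ g hg hr (by linarith))
      fun d hd => hC₂ d g hg hd (by linarith)).mono (le_of_eq ?_) (le_of_eq ?_)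
    · rw [← hsplit]
      push_cast
      ring
    · rw [← ENNReal.ofReal_add (by positivity) (by positivity), ← hsplit]
      push_cast
      ring_nf

theorem exists_encodes_of_measure_le_one (hxy : x ≤ y) (hμ : μ (Ioo x y) ≤ 1) {n : ℕ} (hn : n ≠ 0)
    {K : ℝ} (hK : 0 < K) :
    ∃ C : BracketCode α, ∀ g, LocallyBoundedVariationOn g univ → |g x| ≤ K →
      variationOnFromTo g univ x y ≤ K →
      C.Encodes μ x y g (28 * n) (ENNReal.ofReal ((11 * K / n) ^ 2)) := by
  obtain ⟨k, rfl⟩ := Nat.exists_eq_succ_of_ne_zero hn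
  set η : ℝ := K / (k + 1 : ℕ) with hη_def
  have hη : 0 < η := by positivity
  have hKη : K = (k + 1) * η := by rw [hη_def]; push_cast; field_simp
  obtain ⟨m, hm⟩ := pow_unbounded_of_one_lt (K / η) (by norm_num : (1 : ℝ) < 3 / 2)
  have hcells : μ (Ioo x y) ≤ ENNReal.ofReal ((k + 1) * (1 / (k + 1))) := by
    rwa [mul_one_div_cancel (by positivity), ENNReal.ofReal_one]
  choose C hC using fun d : ℤ =>
    exists_encodes_of_measure_le_mul k m (by positivity) hη (0 + η * d) hxy hcells
  refine ⟨iUnionInt C, fun g hg hgx hV => ?_⟩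
  have hVm : variationOnFromTo g univ x y ≤ η * (3 / 2) ^ m :=
    hV.trans ((div_lt_iff₀' hη).1 hm).le
  have hVη : variationOnFromTo g univ x y / η ≤ k + 1 := by
    rwa [div_le_iff₀ hη, ← hKη]
  have hgxη : |g x - 0| / η ≤ k + 1 := by
    rwa [sub_zero, div_le_iff₀ hη, ← hKη]
  refine (encodes_iUnionInt hη 0 fun d hd => hC d g hg hd hVm).mono ?_ ?_
  · push_cast
    linarith
  · calc _ ≤ ENNReal.ofReal ((2 * η) ^ 2) * 1 + ENNReal.ofReal
          (1 / (k + 1) * η ^ 2 * (16 * (k + 1) + 96 * (k + 1))) := by gcongr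
      _ = ENNReal.ofReal (116 * η ^ 2) := by
        rw [mul_one, ← ENNReal.ofReal_add (by positivity) (by positivity)]
        congr 1
        field_simp
        ring
      _ ≤ _ := by
        rw [mul_div_assoc, ← hη_def]
        gcongr
        nlinarith [sq_nonneg η]

end BracketCode

end BoundedVariation

section Bracketing

lemma two_pow_le_exp (n : ℕ) : (2 : ℝ) ^ n ≤ Real.exp n := by
  rw [← Real.exp_one_pow]
  gcongr
  linarith [Real.add_one_le_exp 1]

lemma eVariationOn_comp_projIcc_le {α E : Type*} [LinearOrder α] [PseudoEMetricSpace E] {a b : α}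
    (hab : a ≤ b) (g : α → E) :
    eVariationOn (fun t => g (projIcc a b hab t)) univ ≤ eVariationOn g (Icc a b) :=
  eVariationOn.comp_le_of_monotoneOn g _ (fun _ _ _ _ hst => monotone_projIcc hab hst)
    fun t _ => (projIcc a b hab t).2

/- The code lives on an open interval strictly larger than `[a, b]`, so that the endpoints, which
may be atoms of `μ`, are treated like any other point. -/
lemma exists_brackets_card_le_two_pow {μ : Measure ℝ} {a b K : ℝ} (hab : a ≤ b)
    (hμ : μ (Icc a b) ≤ 1) (hK : 0 < K) {n : ℕ} (hn : n ≠ 0) :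
    ∃ N : ℕ, N ≤ 2 ^ (28 * n) ∧ ∃ lu : Fin N → (ℝ → ℝ) × (ℝ → ℝ),
      (∀ j, ∫⁻ t in Icc a b, ENNReal.ofReal (((lu j).2 t - (lu j).1 t) ^ 2) ∂μ ≤
        ENNReal.ofReal ((11 * K / n) ^ 2)) ∧
      ∀ g : ℝ → ℝ, (∀ t ∈ Icc a b, |g t| ≤ K) → eVariationOn g (Icc a b) ≤ ENNReal.ofReal K →
        ∃ j, ∀ t ∈ Icc a b, (lu j).1 t ≤ g t ∧ g t ≤ (lu j).2 t := by
  have hsub : Icc a b ⊆ Ioo (a - 1) (b + 1) := Icc_subset_Ioo (by linarith) (by linarith)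
  have hrestrict : (μ.restrict (Icc a b)).restrict (Ioo (a - 1) (b + 1)) = μ.restrict (Icc a b) :=
    (Measure.restrict_comm measurableSet_Ioo).trans (Measure.restrict_restrict_of_subset hsub)
  have hmass : μ.restrict (Icc a b) (Ioo (a - 1) (b + 1)) ≤ 1 :=
    (measure_mono (subset_univ _)).trans (Measure.restrict_apply_univ _ |>.trans_le hμ)
  obtain ⟨C, hC⟩ := BracketCode.exists_encodes_of_measure_le_one
    (by linarith : a - 1 ≤ b + 1) hmass hn hK
  obtain ⟨N, hN, e, hwidth, hrange⟩ := C.exists_fin_enumeration (28 * n) fun i =>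
    ∫⁻ t in Icc a b, ENNReal.ofReal ((C.upper i t - C.lower i t) ^ 2) ∂μ ≤
      ENNReal.ofReal ((11 * K / n) ^ 2)
  refine ⟨N, hN, fun j => (C.lower (e j), C.upper (e j)), hwidth, fun g hgK hgV => ?_⟩
  have hvar := (eVariationOn_comp_projIcc_le hab g).trans hgV
  have hbv : BoundedVariationOn (fun t => g (projIcc a b hab t)) univ :=
    ne_top_of_le_ne_top ENNReal.ofReal_ne_top hvar
  have hV : variationOnFromTo (fun t => g (projIcc a b hab t)) univ (a - 1) (b + 1) ≤ K :=
    (le_abs_self _).trans <| (variationOnFromTo.abs_le_eVariationOn hbv).trans <|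
      ENNReal.toReal_le_of_le_ofReal hK.le hvar
  obtain ⟨i, hlen, hmem, hint⟩ :=
    hC _ hbv.locallyBoundedVariationOn (hgK _ (projIcc a b hab _).2) hV
  rw [hrestrict] at hint
  obtain ⟨j, rfl⟩ := hrange i (mod_cast hlen) hint
  refine ⟨j, fun t ht => ?_⟩
  have hgt := hmem t (hsub ht)
  simp only [projIcc_of_mem hab ht] at hgt
  exact hgt

theorem exists_brackets_of_eVariationOn_le {μ : Measure ℝ} {a b K δ : ℝ} (hab : a ≤ b)
    (hμ : μ (Icc a b) ≤ 1) (hK : 0 ≤ K) (hδ : 0 < δ) :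
    ∃ N : ℕ, (N : ℝ) ≤ Real.exp (364 * K / δ) ∧ ∃ lu : Fin N → (ℝ → ℝ) × (ℝ → ℝ),
      (∀ j, ∫⁻ t in Icc a b, ENNReal.ofReal (((lu j).2 t - (lu j).1 t) ^ 2) ∂μ ≤
        ENNReal.ofReal (δ ^ 2)) ∧
      ∀ g : ℝ → ℝ, (∀ t ∈ Icc a b, |g t| ≤ K) → eVariationOn g (Icc a b) ≤ ENNReal.ofReal K →
        ∃ j, ∀ t ∈ Icc a b, (lu j).1 t ≤ g t ∧ g t ≤ (lu j).2 t := by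
  rcases le_or_gt (2 * K) δ with hcoarse | hfine
  · refine ⟨1, ?_, fun _ => (fun _ => -K, fun _ => K), fun _ => ?_,
      fun g hg _ => ⟨0, fun t ht => abs_le.1 (hg t ht)⟩⟩
    · simpa using div_nonneg (by positivity) hδ.le
    · simp only [setLIntegral_const]
      refine (mul_le_of_le_one_right' hμ).trans (ENNReal.ofReal_le_ofReal ?_)
      exact pow_le_pow_left₀ (by linarith) (by linarith) 2
  · set n := ⌈11 * K / δ⌉₊
    have hKpos : 0 < K := by linarith
    have hn : 11 * K / δ ≤ n := Nat.le_ceil _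
    have hn0 : 0 < n := Nat.ceil_pos.2 (by positivity)
    have hn_le : n ≤ 13 * K / δ := by
      have hceil := (Nat.ceil_lt_add_one (by positivity : 0 ≤ 11 * K / δ)).le
      have hone : 1 ≤ 2 * K / δ := (one_le_div₀ hδ).2 hfine.le
      calc (n : ℝ) ≤ 11 * K / δ + 2 * K / δ := hceil.trans (by linarith)
        _ = 13 * K / δ := by ring
    obtain ⟨N, hN, lu, hwidth, hcover⟩ := exists_brackets_card_le_two_pow hab hμ hKpos hn0.ne'
    refine ⟨N, ?_, lu, fun j => (hwidth j).trans (ENNReal.ofReal_le_ofReal ?_), hcover⟩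
    · calc (N : ℝ) ≤ 2 ^ (28 * n) := mod_cast hN
        _ ≤ Real.exp (28 * n : ℕ) := two_pow_le_exp _
        _ ≤ Real.exp (364 * K / δ) := by
          gcongr
          push_cast
          calc 28 * (n : ℝ) ≤ 28 * (13 * K / δ) := by gcongr
            _ = 364 * K / δ := by ring
    · gcongr
      rw [div_le_iff₀ (mod_cast hn0)]
      rwa [div_le_iff₀' hδ] at hn

end Bracketing

section LogRatio

lemma eVariationOn_le_add_of_edist_le {α E F G : Type*} [LinearOrder α] [PseudoEMetricSpace E]
    [PseudoEMetricSpace F] [PseudoEMetricSpace G] {f : α → E} {g : α → F} {h : α → G} {s : Set α}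
    (hle : ∀ x ∈ s, ∀ y ∈ s, edist (h x) (h y) ≤ edist (f x) (f y) + edist (g x) (g y)) :
    eVariationOn h s ≤ eVariationOn f s + eVariationOn g s := by
  refine iSup_le fun ⟨n, u, hu, hus⟩ => ?_
  calc ∑ i ∈ Finset.range n, edist (h (u (i + 1))) (h (u i))
      ≤ ∑ i ∈ Finset.range n,
          (edist (f (u (i + 1))) (f (u i)) + edist (g (u (i + 1))) (g (u i))) :=
        Finset.sum_le_sum fun i _ => hle _ (hus _) _ (hus _)
    _ ≤ eVariationOn f s + eVariationOn g s := by
      rw [Finset.sum_add_distrib]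
      exact add_le_add (eVariationOn.sum_le hu hus) (eVariationOn.sum_le hu hus)

lemma exists_mem_le_of_setIntegral_eq {α : Type*} [MeasurableSpace α] {μ : Measure α} {s : Set α}
    {f g : α → ℝ} (hμ : μ s ≠ 0) (hμ' : μ s ≠ ∞) (hf : IntegrableOn f s μ)
    (hg : IntegrableOn g s μ) (h : ∫ t in s, f t ∂μ = ∫ t in s, g t ∂μ) :
    ∃ t ∈ s, f t ≤ g t := by
  obtain ⟨t, ht, hle⟩ := exists_le_setAverage hμ hμ' (hf.sub hg)
  have havg : ⨍ t in s, (f - g) t ∂μ = 0 := by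
    rw [setAverage_eq, Pi.sub_def, integral_sub hf hg, h, sub_self, smul_zero]
  exact ⟨t, ht, sub_nonpos.1 (hle.trans_eq havg)⟩

lemma abs_log_add_one_sub_log_add_one_le {u v : ℝ} (hu : 0 < u) (hv : 0 < v) :
    |Real.log (u + 1) - Real.log (v + 1)| ≤ |Real.log u - Real.log v| := by
  wlog h : v ≤ u generalizing u v
  · rw [abs_sub_comm, abs_sub_comm (Real.log u)]
    exact this hv hu (le_of_not_ge h)
  have hlog : Real.log v ≤ Real.log u := Real.log_le_log hv h
  have hlog' : Real.log (v + 1) ≤ Real.log (u + 1) := Real.log_le_log (by positivity) (by linarith)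
  rw [abs_of_nonneg (sub_nonneg.2 hlog), abs_of_nonneg (sub_nonneg.2 hlog'),
    ← Real.log_div (by positivity) (by positivity), ← Real.log_div hu.ne' hv.ne']
  refine Real.log_le_log (by positivity) ?_
  rw [div_le_div_iff₀ (by positivity) hv]
  linarith

variable {a b : ℝ} {f₀ f : ℝ → ℝ}

lemma pfun_eq {t : ℝ} (hf₀ : 0 < f₀ t) (hf : 0 < f t) :
    pfun f₀ f t = (1 / 2) * (Real.log (f t / f₀ t + 1) - Real.log 2) := by
  rw [pfun, ← Real.log_div (by positivity) two_ne_zero]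
  congr 2
  field_simp

lemma abs_pfun_sub_pfun_le {s t : ℝ} (hf₀s : 0 < f₀ s) (hf₀t : 0 < f₀ t) (hfs : 0 < f s)
    (hft : 0 < f t) :
    |pfun f₀ f s - pfun f₀ f t| ≤
      |Real.log (f s) - Real.log (f t)| + |Real.log (f₀ s) - Real.log (f₀ t)| := by
  have hlog := abs_log_add_one_sub_log_add_one_le (div_pos hfs hf₀s) (div_pos hft hf₀t)
  rw [Real.log_div hfs.ne' hf₀s.ne', Real.log_div hft.ne' hf₀t.ne', sub_sub_sub_comm] at hlog
  have htri := abs_sub (Real.log (f s) - Real.log (f t)) (Real.log (f₀ s) - Real.log (f₀ t))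
  rw [pfun_eq hf₀s hfs, pfun_eq hf₀t hft, ← mul_sub, sub_sub_sub_cancel_right, abs_mul,
    abs_of_pos one_half_pos]
  linarith [abs_nonneg (Real.log (f s / f₀ s + 1) - Real.log (f t / f₀ t + 1))]

lemma eVariationOn_pfun_le {s : Set ℝ} (hf₀ : ∀ t ∈ s, 0 < f₀ t) (hf : ∀ t ∈ s, 0 < f t) :
    eVariationOn (pfun f₀ f) s ≤ eVariationOn (fun t => Real.log (f t)) s +
      eVariationOn (fun t => Real.log (f₀ t)) s := by
  refine eVariationOn_le_add_of_edist_le fun x hx y hy => ?_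
  simp only [edist_dist, Real.dist_eq]
  rw [← ENNReal.ofReal_add (abs_nonneg _) (abs_nonneg _)]
  exact ENNReal.ofReal_le_ofReal
    (abs_pfun_sub_pfun_le (hf₀ x hx) (hf₀ y hy) (hf x hx) (hf y hy))

lemma pfun_nonpos_of_le {t : ℝ} (hf₀ : 0 < f₀ t) (hf : 0 < f t) (h : f t ≤ f₀ t) :
    pfun f₀ f t ≤ 0 :=
  mul_nonpos_of_nonneg_of_nonpos one_half_pos.le <|
    Real.log_nonpos (by positivity) ((div_le_one₀ (by positivity)).2 (by linarith))

lemma pfun_nonneg_of_le {t : ℝ} (hf₀ : 0 < f₀ t) (h : f₀ t ≤ f t) : 0 ≤ pfun f₀ f t :=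
  mul_nonneg one_half_pos.le <|
    Real.log_nonneg ((one_le_div₀ (by positivity)).2 (by linarith))

lemma eVariationOn_pfun_le_of_Jfun_le {M : ℝ} (hf₀ : InF a b f₀) (hf : InF a b f)
    (hJ : Jfun a b f₀ f ≤ M) : eVariationOn (pfun f₀ f) (Icc a b) ≤ ENNReal.ofReal M := by
  refine (eVariationOn_pfun_le hf₀.1 hf.1).trans ?_
  rw [← ENNReal.ofReal_toReal hf.2.2.2, ← ENNReal.ofReal_toReal hf₀.2.2.2,
    ← ENNReal.ofReal_add ENNReal.toReal_nonneg ENNReal.toReal_nonneg]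
  refine ENNReal.ofReal_le_ofReal ?_
  rw [Jfun] at hJ
  linarith

/- Both densities integrate to one, so neither lies strictly above the other throughout and `p_f`
takes values of both signs. -/
lemma abs_pfun_le_of_eVariationOn_le {K t : ℝ} (hab : a < b) (hf₀ : InF a b f₀) (hf : InF a b f)
    (hK : 0 ≤ K) (hV : eVariationOn (pfun f₀ f) (Icc a b) ≤ ENNReal.ofReal K)
    (ht : t ∈ Icc a b) : |pfun f₀ f t| ≤ K := by
  have hvol : volume (Icc a b) ≠ 0 := (by simpa using hab : 0 < volume (Icc a b)).ne'
  have hvol' : volume (Icc a b) ≠ ∞ := measure_Icc_lt_top.ne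
  have hint : ∫ t in Icc a b, f t = ∫ t in Icc a b, f₀ t := hf.2.2.1.trans hf₀.2.2.1.symm
  obtain ⟨s, hs, hfs⟩ := exists_mem_le_of_setIntegral_eq hvol hvol' hf.2.1 hf₀.2.1 hint
  obtain ⟨r, hr, hfr⟩ := exists_mem_le_of_setIntegral_eq hvol hvol' hf₀.2.1 hf.2.1 hint.symm
  have hbv : BoundedVariationOn (pfun f₀ f) (Icc a b) :=
    ne_top_of_le_ne_top ENNReal.ofReal_ne_top hV
  have hVK := ENNReal.toReal_le_of_le_ofReal hK hV
  have hps := pfun_nonpos_of_le (hf₀.1 s hs) (hf.1 s hs) hfs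
  have hpr := pfun_nonneg_of_le (hf₀.1 r hr) hfr
  rw [abs_le]
  constructor <;> linarith [hbv.sub_le ht hs, hbv.sub_le hr ht]

end LogRatio

/-- the bracketing entropy of
`P_M = {p_f : f ∈ F, J(f) ≤ M}` at radius `δ` in `L²(Q)` is at most `A·M/δ`:
there are at most `exp(A·M/δ)` brackets of `L²(Q)`-width `δ` covering `P_M`,
for every probability measure `Q` supported on `[a,b]`. -/
theorem stmt_13 (a b : ℝ) (hab : a < b)
    (f₀ : ℝ → ℝ) (hf₀ : InF a b f₀) :
    ∃ A : ℝ, ∀ Q : Measure ℝ, IsProbabilityMeasure Q → Q (Set.Icc a b)ᶜ = 0 →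
      ∀ M ≥ (1 : ℝ), ∀ δ > (0 : ℝ),
        ∃ N : ℕ, (N : ℝ) ≤ Real.exp (A * M / δ) ∧
          ∃ lu : Fin N → (ℝ → ℝ) × (ℝ → ℝ),
            (∀ j, (∫⁻ t, ENNReal.ofReal (((lu j).2 t - (lu j).1 t) ^ 2) ∂Q)
              ≤ ENNReal.ofReal (δ ^ 2)) ∧
            ∀ f : ℝ → ℝ, InF a b f → Jfun a b f₀ f ≤ M →
              ∃ j, ∀ t ∈ Set.Icc a b,
                (lu j).1 t ≤ pfun f₀ f t ∧ pfun f₀ f t ≤ (lu j).2 t := by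
  refine ⟨364, fun Q _ hQ M hM δ hδ => ?_⟩
  have hM0 : 0 ≤ M := zero_le_one.trans hM
  have hrestrict : Q.restrict (Icc a b) = Q := Measure.restrict_eq_self_of_ae_mem hQ
  obtain ⟨N, hN, lu, hwidth, hcover⟩ :=
    exists_brackets_of_eVariationOn_le (μ := Q) hab.le prob_le_one hM0 hδ
  rw [hrestrict] at hwidth
  refine ⟨N, hN, lu, hwidth, fun f hf hJ => ?_⟩
  have hV := eVariationOn_pfun_le_of_Jfun_le hf₀ hf hJ
  exact hcover _ (fun t ht => abs_pfun_le_of_eVariationOn_le hab hf₀ hf hM0 hV ht) hV
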